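/- Let n ≥ 2 and let f ∈ ℚ[x₁,…,xₙ] be a polynomial that is irreducible over ℚ. Suppose there exists a proper Zariski closed subset W ⊊ ℂ^{n−1} such that for every rational point ρ ∈ ℚ^{n−1} with ρ ∉ W there exists t ∈ ℚ with f(ρ, t) = 0. Then the degree of f in the variable xₙ is at most 1. -/

import Mathlib

open MvPolynomial

noncomputable section

/-- A subset of `ℂ^m` is Zariski closed if it is the common zero locus of a family
of polynomials in `m` variables with complex coefficients. -/
def ZClosed (m : ℕ) (S : Set (Fin m → ℂ)) : Prop :=
  ∃ P : Set (MvPolynomial (Fin m) ℂ), S = {z | ∀ p ∈ P, eval z p = 0}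

/-
Clear denominators and make `f` monic in its last variable: this gives a monic separable `F` with
integer coefficients having an integer root `z(x)` at every integer point `x` off a hypersurface.
Fix `x₀` at which the discriminant does not vanish and a large prime `p` not dividing its value. At
`x = x₀ + p s` the root `z` reduces to a simple root `c` of `F(x₀, ·)` mod `p`. Newton iteration
starting from `c` and truncation of a Taylor expansion show that, for each `c`, `z` agrees modulo
`p ^ (D + 1)` with a polynomial in `s` of degree at most `D`, whereas `|z| = O(p ^ D)` on a fixed
grid of values of `s`. The linear relations over `ℤ` satisfied by the values of polynomials of
degree at most `D` hence hold for `z` exactly, and `z` is interpolated by one rational polynomial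
`R_c` of degree at most `D` for each `c`. There are at most `deg F` residues `c`, so `∏ F(x, R_c)`
has degree bounded independently of the grid; vanishing on a large grid off the hypersurface, it
vanishes identically. Thus some `R_c` is a root of `F`, and irreducibility forces degree one.
-/

lemma exists_finset_dotProduct_eq_zero_iff {ι A K : Type*} [Fintype ι] [CommRing A] [IsDomain A]
    [Field K] [Algebra A K] [IsFractionRing A K] (V : Submodule K (ι → K)) :
    ∃ W : Finset (ι → A), ∀ y : ι → K, y ∈ V ↔ ∀ w ∈ W, (algebraMap A K ∘ w) ⬝ᵥ y = 0 := by
  classical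
  obtain ⟨S, hS⟩ := (IsNoetherian.noetherian V.dualAnnihilator : V.dualAnnihilator.FG)
  have clear_denominators (φ : Module.Dual K (ι → K)) :
      ∃ w : ι → A, ∀ y, (algebraMap A K ∘ w) ⬝ᵥ y = 0 ↔ φ y = 0 := by
    obtain ⟨⟨N, hN⟩, hNφ⟩ := IsLocalization.exist_integer_multiples_of_finite (nonZeroDivisors A)
      fun i => φ (Pi.single i 1)
    choose w hw using hNφ
    have hN0 : algebraMap A K N ≠ 0 := IsFractionRing.to_map_ne_zero_of_mem_nonZeroDivisors hN
    refine ⟨w, fun y => ?_⟩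
    have : (algebraMap A K ∘ w) ⬝ᵥ y = algebraMap A K N * φ y := by
      rw [LinearMap.pi_apply_eq_sum_univ φ y, Finset.mul_sum]
      refine Finset.sum_congr rfl fun i _ => ?_
      simp only [Function.comp_apply, hw, Algebra.smul_def, Algebra.algebraMap_self,
        RingHom.id_apply]
      rw [show (fun j => if i = j then (1 : K) else 0) = Pi.single i 1 by
        ext j; simp [Pi.single_apply, eq_comm]]
      ring
    rw [this, mul_eq_zero, or_iff_right hN0]
  choose w hw using clear_denominators
  refine ⟨S.image w, fun y => ?_⟩
  simp only [Finset.forall_mem_image, hw]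
  rw [← Subspace.forall_mem_dualAnnihilator_apply_eq_zero_iff V y, ← hS]
  refine ⟨fun h φ hφ => h φ (Submodule.subset_span hφ), fun h φ hφ => ?_⟩
  have : Submodule.span K (S : Set (Module.Dual K (ι → K))) ≤
      LinearMap.ker (Module.Dual.eval K (ι → K) y) := Submodule.span_le.mpr h
  exact this hφ

lemma exists_forall_intCast_mem_of_modEq {ι : Type*} [Finite ι] (V : Submodule ℚ (ι → ℚ)) :
    ∃ B : ℤ, ∀ (P M : ℤ) (y z : ι → ℤ), (fun i => (y i : ℚ)) ∈ V →
      (∀ i, z i ≡ y i [ZMOD P]) → (∀ i, |z i| ≤ M) → B * M < P → (fun i => (z i : ℚ)) ∈ V := by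
  have := Fintype.ofFinite ι
  obtain ⟨W, hW⟩ := exists_finset_dotProduct_eq_zero_iff (A := ℤ) V
  have cast_dotProduct (w x : ι → ℤ) :
      (algebraMap ℤ ℚ ∘ w) ⬝ᵥ (fun i => (x i : ℚ)) = ((w ⬝ᵥ x : ℤ) : ℚ) := by
    simp [dotProduct]
  simp only [hW, cast_dotProduct, Int.cast_eq_zero]
  refine ⟨∑ w ∈ W, ∑ i, |w i|, fun P M y z hy hzy hzM hMP w hw => ?_⟩
  rcases isEmpty_or_nonempty ι with _ | ⟨⟨i₀⟩⟩
  · exact Matrix.dotProduct_of_isEmpty w z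
  have hM : 0 ≤ M := (abs_nonneg _).trans (hzM i₀)
  have dvd : P ∣ w ⬝ᵥ z := by
    rw [← Int.modEq_zero_iff_dvd, ← hy w hw]
    exact Int.ModEq.sum fun i _ => (hzy i).mul_left _
  refine Int.eq_zero_of_abs_lt_dvd dvd (lt_of_le_of_lt ?_ hMP)
  calc |w ⬝ᵥ z| ≤ ∑ i, |w i * z i| := Finset.abs_sum_le_sum_abs _ _
    _ ≤ ∑ i, |w i| * M := by
      gcongr with i
      exact (abs_mul _ _).trans_le (mul_le_mul_of_nonneg_left (hzM i) (abs_nonneg _))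
    _ = (∑ i, |w i|) * M := (Finset.sum_mul ..).symm
    _ ≤ (∑ w ∈ W, ∑ i, |w i|) * M := by
      gcongr
      exact Finset.single_le_sum (f := fun w : ι → ℤ => ∑ i, |w i|)
        (fun w _ => Finset.sum_nonneg fun i _ => abs_nonneg _) hw

section TotalDegree

variable {σ R S : Type*} [CommSemiring R] [CommSemiring S]

lemma totalDegree_aeval_le {τ : Type*} (f : σ → MvPolynomial τ R) {n : ℕ}
    (hf : ∀ i, (f i).totalDegree ≤ n) (q : MvPolynomial σ R) :
    (aeval f q).totalDegree ≤ q.totalDegree * n := by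
  rw [aeval_def, eval₂_eq]
  refine totalDegree_finsetSum_le fun α hα => ?_
  calc _ ≤ 0 + ∑ i ∈ α.support, α i * n := by
        refine (totalDegree_mul _ _).trans (add_le_add (by simp [algebraMap_eq]) ?_)
        refine (totalDegree_finsetProd _ _).trans (Finset.sum_le_sum fun i _ => ?_)
        exact (totalDegree_pow _ _).trans (Nat.mul_le_mul_left _ (hf i))
    _ ≤ q.totalDegree * n := by
        rw [zero_add, ← Finset.sum_mul]
        exact Nat.mul_le_mul_right _ (le_totalDegree hα)

lemma totalDegree_eval₂_map_le (φ : R →+* S) (F : Polynomial (MvPolynomial σ R))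
    (q : MvPolynomial σ S) :
    (F.eval₂ (map φ) q).totalDegree ≤
      F.support.sup (fun i => (F.coeff i).totalDegree) + F.natDegree * q.totalDegree := by
  rw [Polynomial.eval₂_eq_sum, Polynomial.sum_def]
  refine totalDegree_finsetSum_le fun i hi => ?_
  refine (totalDegree_mul _ _).trans (add_le_add ?_ ?_)
  · exact (Finset.sup_mono (support_map_subset _ _)).trans
      (Finset.le_sup (f := fun i => (F.coeff i).totalDegree) hi)
  · exact (totalDegree_pow _ _).trans
      (Nat.mul_le_mul_right _ (Polynomial.le_natDegree_of_mem_supp i hi))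

lemma eval_smul_of_isHomogeneous {φ : MvPolynomial σ R} {n : ℕ} (hφ : φ.IsHomogeneous n) (p : R)
    (s : σ → R) : eval (p • s) φ = p ^ n * eval s φ := by
  rw [eval_eq, eval_eq, Finset.mul_sum]
  refine Finset.sum_congr rfl fun α hα => ?_
  have degree_eq : ∑ i ∈ α.support, α i = n := by
    rw [← hφ (mem_support_iff.mp hα), ← Finsupp.degree_apply, Finsupp.degree_eq_weight_one]; rfl
  simp only [Pi.smul_apply, smul_eq_mul, mul_pow, Finset.prod_mul_distrib,
    Finset.prod_pow_eq_pow_sum, degree_eq]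
  ring

end TotalDegree

section Substitution

variable {σ : Type*}

lemma exists_totalDegree_le_dvd_eval_sub {R : Type*} [CommRing R] (G : MvPolynomial σ R)
    (x₀ : σ → R) (p : R) (D : ℕ) :
    ∃ H : MvPolynomial σ R, H.totalDegree ≤ D ∧
      ∀ s, p ^ (D + 1) ∣ eval (x₀ + p • s) G - eval s H := by
  set T : MvPolynomial σ R := aeval (fun i => C (x₀ i) + X i) G
  let I := Finset.range (T.totalDegree + 1)
  refine ⟨∑ k ∈ I with k ≤ D, C (p ^ k) * homogeneousComponent k T,
    totalDegree_finsetSum_le fun k hk => ?_, fun s => ?_⟩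
  · refine (totalDegree_mul _ _).trans ?_
    rw [totalDegree_C, zero_add]
    exact (homogeneousComponent_isHomogeneous k T).totalDegree_le.trans (Finset.mem_filter.mp hk).2
  have eval_translate : eval (x₀ + p • s) G = eval (p • s) T := by
    rw [← aeval_eq_eval, ← aeval_eq_eval, ← AlgHom.comp_apply, comp_aeval]
    congr 2
    ext i
    simp
  have eval_component (k : ℕ) : eval (p • s) (homogeneousComponent k T) =
      p ^ k * eval s (homogeneousComponent k T) :=
    eval_smul_of_isHomogeneous (homogeneousComponent_isHomogeneous k T) p s
  have : eval (p • s) T = ∑ k ∈ I, p ^ k * eval s (homogeneousComponent k T) := by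
    conv_lhs => rw [← sum_homogeneousComponent T]
    simp only [map_sum, eval_component, I]
  rw [eval_translate, this, ← Finset.sum_filter_add_sum_filter_not I (· ≤ D)]
  simp only [map_sum, map_mul, eval_C, add_sub_cancel_left]
  refine Finset.dvd_sum fun k hk => ?_
  have hk := (Finset.mem_filter.mp hk).2
  exact (pow_dvd_pow p (by omega)).mul_right _

lemma exists_totalDegree_le_eval_add_smul {K : Type*} [Field K] (x₀ : σ → K) {p : K} (hp : p ≠ 0)
    (R : MvPolynomial σ K) :
    ∃ R' : MvPolynomial σ K, R'.totalDegree ≤ R.totalDegree ∧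
      ∀ s, eval (x₀ + p • s) R' = eval s R := by
  refine ⟨aeval (fun i => C p⁻¹ * (X i - C (x₀ i))) R, ?_, fun s => ?_⟩
  · refine (totalDegree_aeval_le _ (n := 1) (fun i => ?_) R).trans_eq (mul_one _)
    refine (totalDegree_mul _ _).trans ?_
    rw [totalDegree_C, zero_add]
    exact (totalDegree_sub_C_le _ _).trans (totalDegree_X _).le
  · rw [← aeval_eq_eval, ← aeval_eq_eval, ← AlgHom.comp_apply, comp_aeval]
    congr 2
    ext i
    simp [hp]

end Substitution

lemma exists_eq_zero_of_eval_eq_zero_on_grid {σ ι R : Type*} [Finite σ] [CommRing R] [IsDomain R]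
    (I : Finset ι) (q : ι → MvPolynomial σ R) {h : MvPolynomial σ R} (hh : h ≠ 0)
    (S : σ → Finset R) (hS : ∀ i, h.totalDegree + ∑ c ∈ I, (q c).totalDegree < (S i).card)
    (hq : ∀ x : σ → R, (∀ i, x i ∈ S i) → eval x h ≠ 0 → ∃ c ∈ I, eval x (q c) = 0) :
    ∃ c ∈ I, q c = 0 := by
  have prod_eq_zero : h * ∏ c ∈ I, q c = 0 := by
    refine eq_zero_of_eval_zero_at_prod_finset _ S (fun i => ?_) fun x hx => ?_
    · calc _ ≤ (h * ∏ c ∈ I, q c).totalDegree := degreeOf_le_totalDegree _ _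
        _ ≤ h.totalDegree + ∑ c ∈ I, (q c).totalDegree :=
          (totalDegree_mul _ _).trans (add_le_add_right (totalDegree_finsetProd _ _) _)
        _ < (S i).card := hS i
    · rw [map_mul, map_prod, mul_eq_zero, Finset.prod_eq_zero_iff]
      exact or_iff_not_imp_left.mpr (hq x hx)
  exact Finset.prod_eq_zero_iff.mp ((mul_eq_zero.mp prod_eq_zero).resolve_left hh)

lemma pow_dvd_sub_mul_eval_sub_of_isRoot {R : Type*} [CommRing R] (f : Polynomial R)
    {p v y z : R} {k : ℕ} (hz : f.IsRoot z) (hv : p ∣ 1 - v * f.derivative.eval z)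
    (hy : p ^ (k + 1) ∣ y - z) :
    p ^ (k + 2) ∣ y - v * f.eval y - z := by
  obtain ⟨q, hq⟩ := Polynomial.binomExpansion f z (y - z)
  rw [add_sub_cancel, hz.eq_zero, zero_add] at hq
  have expand : y - v * f.eval y - z =
      (y - z) * (1 - v * f.derivative.eval z) - v * q * ((y - z) * (y - z)) := by
    rw [hq]; ring
  rw [expand]
  refine dvd_sub (pow_succ p (k + 1) ▸ mul_dvd_mul hy hv) (Dvd.dvd.mul_left ?_ _)
  exact (pow_dvd_pow p (by omega)).trans (pow_add p (k + 1) (k + 1) ▸ mul_dvd_mul hy hy)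

lemma exists_pow_dvd_map_sub_root {A B : Type*} [CommRing A] [CommRing B] (F : Polynomial A)
    (r v : A) (k : ℕ) :
    ∃ G : A, ∀ (φ : A →+* B) (p z : B), (F.map φ).IsRoot z → p ∣ φ r - z →
      p ∣ 1 - φ v * (F.map φ).derivative.eval z → p ^ (k + 1) ∣ φ G - z := by
  induction k with
  | zero => exact ⟨r, fun φ p z _ hr _ => by simpa using hr⟩
  | succ k ih =>
    obtain ⟨G, hG⟩ := ih
    refine ⟨G - v * F.eval G, fun φ p z hz hr hv => ?_⟩
    rw [map_sub, map_mul, ← Polynomial.eval_map_apply]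
    exact pow_dvd_sub_mul_eval_sub_of_isRoot _ hz hv (hG φ p z hz hr hv)

lemma abs_le_of_isRoot_of_monic {f : Polynomial ℤ} (hf : f.Monic) {M z : ℤ}
    (hM : ∀ i, |f.coeff i| ≤ M) (hz : f.IsRoot z) : |z| ≤ M + 1 := by
  lift M to ℕ using (abs_nonneg _).trans (hM 0)
  have root : (f.map (Int.castRingHom ℝ)).IsRoot (z : ℝ) := hz.map (f := Int.castRingHom ℝ)
  have monic := hf.map (Int.castRingHom ℝ)
  have bound : (f.map (Int.castRingHom ℝ)).cauchyBound ≤ (M : NNReal) + 1 := by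
    rw [Polynomial.cauchyBound, monic.leadingCoeff, nnnorm_one, div_one]
    gcongr
    refine Finset.sup_le fun i _ => ?_
    rw [← NNReal.coe_le_coe, Polynomial.coeff_map]
    simpa using mod_cast hM i
  have norm_lt := (root.norm_lt_cauchyBound monic.ne_zero).trans_le bound
  rw [← NNReal.coe_lt_coe, coe_nnnorm, Real.norm_eq_abs] at norm_lt
  have norm_le : |(z : ℝ)| ≤ ((M + 1 : ℤ) : ℝ) := by simpa using norm_lt.le
  exact_mod_cast norm_le

lemma abs_eval_le {σ : Type*} (g : MvPolynomial σ ℤ) {x : σ → ℤ} {M : ℤ} (hM : 1 ≤ M)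
    (hx : ∀ i, |x i| ≤ M) :
    |eval x g| ≤ (∑ α ∈ g.support, |g.coeff α|) * M ^ g.totalDegree := by
  rw [eval_eq, Finset.sum_mul]
  refine (Finset.abs_sum_le_sum_abs _ _).trans (Finset.sum_le_sum fun α hα => ?_)
  rw [abs_mul, Finset.abs_prod]
  gcongr
  calc ∏ i ∈ α.support, |x i ^ α i| ≤ ∏ i ∈ α.support, M ^ α i := by
        gcongr with i
        rw [abs_pow]
        gcongr
        exact hx i
    _ = M ^ ∑ i ∈ α.support, α i := Finset.prod_pow_eq_pow_sum _ _ _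
    _ ≤ M ^ g.totalDegree := pow_le_pow_right₀ hM (le_totalDegree hα)

lemma exists_abs_root_le {σ : Type*} {F : Polynomial (MvPolynomial σ ℤ)} (hF : F.Monic) :
    ∃ (C : ℤ) (D : ℕ), ∀ (x : σ → ℤ) (M z : ℤ), 1 ≤ M → (∀ i, |x i| ≤ M) →
      (F.map (eval x)).IsRoot z → |z| ≤ C * M ^ D := by
  set c : ℕ → ℤ := fun i => ∑ α ∈ (F.coeff i).support, |(F.coeff i).coeff α|
  have hc (i : ℕ) : 0 ≤ c i := Finset.sum_nonneg fun _ _ => abs_nonneg _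
  set D := F.support.sup fun i => (F.coeff i).totalDegree
  refine ⟨∑ i ∈ F.support, c i + 1, D, fun x M z hM hx hz => ?_⟩
  have coeff_le (i : ℕ) : |(F.map (eval x)).coeff i| ≤ (∑ i ∈ F.support, c i) * M ^ D := by
    rw [Polynomial.coeff_map]
    by_cases hi : i ∈ F.support
    · refine (abs_eval_le _ hM hx).trans ?_
      exact mul_le_mul (Finset.single_le_sum (fun i _ => hc i) hi)
        (pow_le_pow_right₀ hM (Finset.le_sup (f := fun i => (F.coeff i).totalDegree) hi))
        (by positivity) (Finset.sum_nonneg fun i _ => hc i)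
    · rw [Polynomial.notMem_support_iff.mp hi, map_zero, abs_zero]
      exact mul_nonneg (Finset.sum_nonneg fun i _ => hc i) (by positivity)
  calc |z| ≤ (∑ i ∈ F.support, c i) * M ^ D + 1 :=
        abs_le_of_isRoot_of_monic (hF.map _) coeff_le hz
    _ ≤ (∑ i ∈ F.support, c i + 1) * M ^ D := by
        rw [add_one_mul]
        gcongr
        exact one_le_pow₀ hM

section Interpolation

variable {σ : Type*}

lemma castRingHom_comp_eval_add_smul (p : ℕ) (x₀ s : σ → ℤ) :
    (Int.castRingHom (ZMod p)).comp (eval (x₀ + (p : ℤ) • s)) =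
      (Int.castRingHom (ZMod p)).comp (eval x₀) := by
  ext i <;> simp

lemma exists_totalDegree_le_pow_dvd_eval_sub_root (F : Polynomial (MvPolynomial σ ℤ)) {p : ℕ}
    [Fact p.Prime] (x₀ : σ → ℤ) {c : ZMod p}
    (hc : (F.map ((Int.castRingHom (ZMod p)).comp (eval x₀))).derivative.eval c ≠ 0) (D : ℕ) :
    ∃ H : MvPolynomial σ ℤ, H.totalDegree ≤ D ∧ ∀ (s : σ → ℤ) (z : ℤ),
      (F.map (eval (x₀ + (p : ℤ) • s))).IsRoot z → (z : ZMod p) = c →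
        (p : ℤ) ^ (D + 1) ∣ eval s H - z := by
  obtain ⟨r, hr⟩ := ZMod.intCast_surjective c
  obtain ⟨v, hv⟩ := ZMod.intCast_surjective
    ((F.map ((Int.castRingHom (ZMod p)).comp (eval x₀))).derivative.eval c)⁻¹
  obtain ⟨G, hG⟩ := exists_pow_dvd_map_sub_root (B := ℤ) F (C r) (C v) D
  obtain ⟨H, hHdeg, hHG⟩ := exists_totalDegree_le_dvd_eval_sub G x₀ (p : ℤ) D
  refine ⟨H, hHdeg, fun s z hz hzc => ?_⟩
  have derivative_mod : (((F.map (eval (x₀ + (p : ℤ) • s))).derivative.eval z : ℤ) : ZMod p) =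
      (F.map ((Int.castRingHom (ZMod p)).comp (eval x₀))).derivative.eval c := by
    rw [← castRingHom_comp_eval_add_smul p x₀ s, ← Polynomial.map_map,
      Polynomial.derivative_map _ (Int.castRingHom (ZMod p)), ← hzc]
    simp
  have approx : (p : ℤ) ^ (D + 1) ∣ eval (x₀ + (p : ℤ) • s) G - z := by
    refine hG _ p z hz ?_ ?_
    · rw [eval_C, ← ZMod.intCast_zmod_eq_zero_iff_dvd, Int.cast_sub, hr, hzc, sub_self]
    · rw [eval_C, ← ZMod.intCast_zmod_eq_zero_iff_dvd, Int.cast_sub, Int.cast_mul, Int.cast_one,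
        hv, derivative_mod, inv_mul_cancel₀ hc, sub_self]
  simpa using dvd_sub approx (hHG s)

lemma exists_abs_add_smul_le [Finite σ] (x₀ : σ → ℤ) (T : Finset (σ → ℤ)) :
    ∃ M : ℤ, 1 ≤ M ∧ ∀ p : ℕ, 1 ≤ p → ∀ s ∈ T, ∀ i, |(x₀ + (p : ℤ) • s) i| ≤ M * p := by
  obtain ⟨M, hM⟩ := (Set.finite_range fun q : T × σ => |x₀ q.2| + |q.1.1 q.2|).bddAbove
  refine ⟨max M 1, le_max_right _ _, fun p hp s hs i => ?_⟩
  have hp : (1 : ℤ) ≤ p := mod_cast hp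
  calc |x₀ i + p * s i| ≤ |x₀ i| + p * |s i| := by
        simpa [abs_mul] using abs_add_le (x₀ i) (p * s i)
    _ ≤ (|x₀ i| + |s i|) * p := by nlinarith [abs_nonneg (x₀ i), hp]
    _ ≤ max M 1 * p := by
        gcongr
        exact (hM ⟨(⟨s, hs⟩, i), rfl⟩).trans (le_max_left _ _)

lemma exists_interpolation_of_modEq (D : ℕ) (T : Finset (σ → ℤ)) :
    ∃ B : ℤ, ∀ (P M : ℤ) (H : MvPolynomial σ ℤ) (z : (σ → ℤ) → ℤ), H.totalDegree ≤ D →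
      (∀ s ∈ T, z s ≡ eval s H [ZMOD P]) → (∀ s ∈ T, |z s| ≤ M) → B * M < P →
      ∃ R : MvPolynomial σ ℚ, R.totalDegree ≤ D ∧ ∀ s ∈ T, eval (fun i => (s i : ℚ)) R = z s := by
  let evalT : MvPolynomial σ ℚ →ₗ[ℚ] T → ℚ :=
    LinearMap.pi fun s => (aeval fun i => (s.1 i : ℚ)).toLinearMap
  obtain ⟨B, hB⟩ := exists_forall_intCast_mem_of_modEq ((restrictTotalDegree σ ℚ D).map evalT)
  refine ⟨B, fun P M H z hHdeg z_mod z_le hP => ?_⟩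
  have eval_mem : (fun s : T => ((eval s.1 H : ℤ) : ℚ)) ∈
      (restrictTotalDegree σ ℚ D).map evalT := by
    refine ⟨map (Int.castRingHom ℚ) H, (mem_restrictTotalDegree ..).mpr ?_, funext fun s => ?_⟩
    · exact (Finset.sup_mono (support_map_subset _ _)).trans hHdeg
    · simpa [evalT, aeval_eq_eval, eval_map, Function.comp_def] using
        (eval₂_comp (Int.castRingHom ℚ) s.1 H).symm
  obtain ⟨R, hRdeg, hR⟩ := hB P M _ (fun s => z s) eval_mem (fun s => z_mod s s.2)
    (fun s => z_le s s.2) hP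
  exact ⟨R, (mem_restrictTotalDegree ..).mp hRdeg, fun s hs => congrFun hR ⟨s, hs⟩⟩

lemma exists_interpolation_of_root_residue [Finite σ] {F : Polynomial (MvPolynomial σ ℤ)}
    (hF : F.Monic) (x₀ : σ → ℤ) :
    ∃ D : ℕ, ∀ T : Finset (σ → ℤ), ∀ᶠ p : ℕ in Filter.atTop, p.Prime →
      ∀ (c : ZMod p) (z : (σ → ℤ) → ℤ),
        (F.map ((Int.castRingHom (ZMod p)).comp (eval x₀))).derivative.eval c ≠ 0 →
        (∀ s ∈ T, (F.map (eval (x₀ + (p : ℤ) • s))).IsRoot (z s) ∧ (z s : ZMod p) = c) →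
        ∃ R : MvPolynomial σ ℚ, R.totalDegree ≤ D ∧
          ∀ s ∈ T, eval (fun i => ((x₀ + (p : ℤ) • s) i : ℚ)) R = z s := by
  obtain ⟨A, D, root_le⟩ := exists_abs_root_le hF
  refine ⟨D, fun T => ?_⟩
  obtain ⟨M, hM, point_le⟩ := exists_abs_add_smul_le x₀ T
  obtain ⟨B, hB⟩ := exists_interpolation_of_modEq D T
  filter_upwards [Filter.eventually_gt_atTop (B * (A * M ^ D)).toNat, Filter.eventually_ge_atTop 1]
    with p hpB hp1 hp c z hc hz
  have := Fact.mk hp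
  obtain ⟨H, hHdeg, hH⟩ := exists_totalDegree_le_pow_dvd_eval_sub_root F x₀ hc D
  have hp0 : (0 : ℤ) < p := mod_cast hp1
  have z_le (s) (hs : s ∈ T) : |z s| ≤ A * (M * p) ^ D :=
    root_le _ _ _ (by nlinarith) (point_le p hp1 s hs) (hz s hs).1
  have z_mod (s) (hs : s ∈ T) : z s ≡ eval s H [ZMOD (p : ℤ) ^ (D + 1)] :=
    Int.modEq_iff_dvd.mpr (hH s _ (hz s hs).1 (hz s hs).2)
  have modulus_gt : B * (A * (M * p) ^ D) < (p : ℤ) ^ (D + 1) := by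
    rw [mul_pow, ← mul_assoc A, ← mul_assoc B, pow_succ']
    exact mul_lt_mul_of_pos_right (by omega) (pow_pos hp0 D)
  obtain ⟨R, hRdeg, hR⟩ := hB _ _ H z hHdeg z_mod z_le modulus_gt
  obtain ⟨R', hR'deg, hR'⟩ := exists_totalDegree_le_eval_add_smul
    (fun i => (x₀ i : ℚ)) (Nat.cast_ne_zero.mpr hp.ne_zero) R
  refine ⟨R', hR'deg.trans hRdeg, fun s hs => ?_⟩
  rw [← hR s hs, ← hR']
  congr 2
  ext i
  simp

end Interpolation

section Discriminant

variable {A B : Type*} [CommRing A] [CommRing B]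

lemma map_resultant_eq_zero_of_isRoot (φ : A →+* B)
    {f g : Polynomial A} (hf : f.natDegree ≠ 0) {z : B} (hfz : (f.map φ).IsRoot z)
    (hgz : (g.map φ).IsRoot z) : φ (Polynomial.resultant f g) = 0 := by
  obtain ⟨a, b, -, -, hab⟩ :=
    Polynomial.exists_mul_add_mul_eq_C_resultant f g le_rfl le_rfl (Or.inl hf)
  simpa [hfz.eq_zero, hgz.eq_zero] using (congrArg (fun q => (q.map φ).eval z) hab).symm

lemma resultant_derivative_ne_zero {K : Type*} [Field K] {φ : A →+* K}
    (hφ : Function.Injective φ) {F : Polynomial A} (hF : (F.map φ).Separable) :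
    Polynomial.resultant F F.derivative ≠ 0 := by
  have := Polynomial.resultant_ne_zero _ _ hF
  rw [Polynomial.derivative_map, Polynomial.natDegree_map_eq_of_injective hφ,
    Polynomial.natDegree_map_eq_of_injective hφ, Polynomial.resultant_map_map] at this
  exact fun h => this (by rw [h, map_zero])

lemma derivative_eval_ne_zero_of_map_resultant_ne_zero (φ : A →+* B) {f : Polynomial A}
    (hf : f.natDegree ≠ 0) (hφ : φ (Polynomial.resultant f f.derivative) ≠ 0) {c : B}
    (hc : (f.map φ).IsRoot c) :
    (f.map φ).derivative.eval c ≠ 0 := fun hc' =>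
  hφ (map_resultant_eq_zero_of_isRoot φ hf hc (by rwa [Polynomial.derivative_map] at hc'))

end Discriminant

section IntegerRoots

variable {σ : Type*} [Finite σ] {F : Polynomial (MvPolynomial σ ℤ)}

lemma exists_prime_forall_interpolation (hF : F.Monic) (hdeg : F.natDegree ≠ 0)
    (hres : Polynomial.resultant F F.derivative ≠ 0) :
    ∃ (x₀ : σ → ℤ) (D : ℕ), ∀ grid : Finset (σ → ℤ), ∃ p : ℕ, p.Prime ∧ ∀ z : (σ → ℤ) → ℤ,
      ∃ I : Finset (MvPolynomial σ ℚ), I.card ≤ F.natDegree ∧ (∀ R ∈ I, R.totalDegree ≤ D) ∧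
        ∀ s ∈ grid, (F.map (eval (x₀ + (p : ℤ) • s))).IsRoot (z s) →
          ∃ R ∈ I, eval (fun i => ((x₀ + (p : ℤ) • s) i : ℚ)) R = z s := by
  classical
  obtain ⟨x₀, hx₀⟩ : ∃ x₀, eval x₀ (Polynomial.resultant F F.derivative) ≠ 0 := by
    by_contra! H
    exact hres (MvPolynomial.funext fun x => by rw [H, map_zero])
  obtain ⟨D, hD⟩ := exists_interpolation_of_root_residue hF x₀
  refine ⟨x₀, D, fun grid => ?_⟩
  obtain ⟨p, hp, hpres, hpgrid⟩ := ((Nat.frequently_atTop_iff_infinite.2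
    Nat.infinite_setOfPred_prime).and_eventually ((Filter.eventually_gt_atTop
      (eval x₀ (Polynomial.resultant F F.derivative)).natAbs).and
    ((Filter.eventually_all_finset grid.powerset).mpr fun T _ => hD T))).exists
  have := Fact.mk hp
  refine ⟨p, hp, fun z => ?_⟩
  set φ := (Int.castRingHom (ZMod p)).comp (eval x₀) with hφ
  have res_mod_ne_zero : φ (Polynomial.resultant F F.derivative) ≠ 0 := by
    rw [hφ, RingHom.comp_apply, eq_intCast, Ne, ZMod.intCast_zmod_eq_zero_iff_dvd]
    refine fun hdvd => hx₀ (Int.eq_zero_of_abs_lt_dvd hdvd ?_)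
    rw [Int.abs_eq_natAbs]
    exact_mod_cast hpres
  have interpolate (c : ZMod p) (hc : (F.map φ).IsRoot c) :=
    hpgrid {s ∈ grid | (F.map (eval (x₀ + (p : ℤ) • s))).IsRoot (z s) ∧ (z s : ZMod p) = c}
      (Finset.mem_powerset.mpr (Finset.filter_subset _ _)) hp c z
      (derivative_eval_ne_zero_of_map_resultant_ne_zero φ hdeg res_mod_ne_zero hc)
      fun s hs => (Finset.mem_filter.mp hs).2
  choose! R hRdeg hR using interpolate
  have mem_roots (c : ZMod p) : c ∈ (F.map φ).roots.toFinset ↔ (F.map φ).IsRoot c := by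
    rw [Multiset.mem_toFinset, Polynomial.mem_roots (hF.map φ).ne_zero]
  refine ⟨(F.map φ).roots.toFinset.image R, ?_, ?_, fun s hs hzs => ?_⟩
  · refine Finset.card_image_le.trans ((Multiset.toFinset_card_le _).trans ?_)
    exact (Polynomial.card_roots' _).trans Polynomial.natDegree_map_le
  · exact Finset.forall_mem_image.mpr fun c hc => hRdeg c ((mem_roots c).mp hc)
  · have root_mod : (F.map φ).IsRoot (z s : ZMod p) := by
      rw [hφ, ← castRingHom_comp_eval_add_smul p x₀ s, ← Polynomial.map_map]
      exact hzs.map (f := Int.castRingHom (ZMod p))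
    exact ⟨_, Finset.mem_image_of_mem R ((mem_roots _).mpr root_mod),
      hR _ root_mod s (Finset.mem_filter.mpr ⟨hs, hzs, rfl⟩)⟩

lemma exists_finset_interpolation_on_grid (hF : F.Monic) (hdeg : F.natDegree ≠ 0)
    (hres : Polynomial.resultant F F.derivative ≠ 0) (z : (σ → ℤ) → ℤ) :
    ∃ D : ℕ, ∀ K : ℕ, ∃ (S : σ → Finset ℤ) (I : Finset (MvPolynomial σ ℚ)),
      (∀ i, (S i).card = K) ∧ I.card ≤ F.natDegree ∧ (∀ R ∈ I, R.totalDegree ≤ D) ∧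
      ∀ x, (∀ i, x i ∈ S i) → (F.map (eval x)).IsRoot (z x) →
        ∃ R ∈ I, eval (fun i => (x i : ℚ)) R = z x := by
  classical
  have := Fintype.ofFinite σ
  obtain ⟨x₀, D, hD⟩ := exists_prime_forall_interpolation hF hdeg hres
  refine ⟨D, fun K => ?_⟩
  obtain ⟨p, hp, hpI⟩ := hD (Fintype.piFinset fun _ => (Finset.range K).image Nat.cast)
  obtain ⟨I, hI, hIdeg, hIz⟩ := hpI fun s => z (x₀ + (p : ℤ) • s)
  refine ⟨fun i => (Finset.range K).image fun k : ℕ => x₀ i + p * k, I, fun i => ?_, hI, hIdeg,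
    fun x hx => ?_⟩
  · rw [Finset.card_image_of_injective, Finset.card_range]
    intro k l hkl
    simpa [hp.ne_zero] using hkl
  · simp only [Finset.mem_image] at hx
    choose k hkK hkx using hx
    obtain rfl : x₀ + (p : ℤ) • (fun i => (k i : ℤ)) = x := funext hkx
    exact hIz _ (Fintype.mem_piFinset.mpr fun i => Finset.mem_image_of_mem _ (hkK i))

lemma exists_eval₂_eq_zero_of_integer_roots (hF : F.Monic) (hdeg : F.natDegree ≠ 0)
    (hres : Polynomial.resultant F F.derivative ≠ 0) {h : MvPolynomial σ ℚ} (hh : h ≠ 0)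
    (hroot : ∀ x : σ → ℤ, eval (fun i => (x i : ℚ)) h ≠ 0 → ∃ z, (F.map (eval x)).IsRoot z) :
    ∃ R : MvPolynomial σ ℚ, F.eval₂ (map (Int.castRingHom ℚ)) R = 0 := by
  choose! z hz using hroot
  obtain ⟨D, hD⟩ := exists_finset_interpolation_on_grid hF hdeg hres z
  set E := F.support.sup (fun i => (F.coeff i).totalDegree) + F.natDegree * D
  obtain ⟨S, I, hS, hI, hIdeg, hIz⟩ := hD (h.totalDegree + F.natDegree * E + 1)
  suffices ∃ R ∈ I, F.eval₂ (map (Int.castRingHom ℚ)) R = 0 from this.imp fun _ => And.right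
  refine exists_eq_zero_of_eval_eq_zero_on_grid I _ hh (fun i => (S i).image Int.cast)
    (fun i => ?_) fun x hx hxh => ?_
  · rw [Finset.card_image_of_injective _ Int.cast_injective, hS, Nat.lt_succ_iff]
    gcongr
    calc ∑ R ∈ I, (F.eval₂ (map (Int.castRingHom ℚ)) R).totalDegree ≤ I.card • E :=
          Finset.sum_le_card_nsmul _ _ _ fun R hR => (totalDegree_eval₂_map_le _ F R).trans
            (Nat.add_le_add_left (Nat.mul_le_mul_left _ (hIdeg R hR)) _)
      _ ≤ F.natDegree * E := Nat.mul_le_mul_right _ hI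
  · simp only [Finset.mem_image] at hx
    choose y hy hyx using hx
    obtain rfl : (fun i => (y i : ℚ)) = x := funext hyx
    obtain ⟨R, hRI, hR⟩ := hIz y hy (hz y hxh)
    have comp_eq : (eval fun i => (y i : ℚ)).comp (map (Int.castRingHom ℚ)) =
        (Int.castRingHom ℚ).comp (eval y) := by
      ext i <;> simp
    refine ⟨R, hRI, ?_⟩
    rw [Polynomial.hom_eval₂, comp_eq, hR, ← Polynomial.eval_map, ← Polynomial.map_map]
    exact (hz y hxh).map (f := Int.castRingHom ℚ)

end IntegerRoots

lemma exists_map_eq_C_mul {σ A B : Type*} [CommRing A] [CommRing B] [Algebra A B]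
    (M : Submonoid A) [IsLocalization M B] (g : Polynomial (MvPolynomial σ B)) :
    ∃ N ∈ M, ∃ g₁ : Polynomial (MvPolynomial σ A),
      g₁.map (map (algebraMap A B)) = Polynomial.C (C (algebraMap A B N)) * g := by
  let _ : Algebra (MvPolynomial σ A) (MvPolynomial σ B) := algebraMvPolynomial
  obtain ⟨_, ⟨N, hN, rfl⟩, hg⟩ := IsLocalization.integerNormalization_spec (M.map (C (σ := σ))) g
  refine ⟨N, hN, _, hg.trans ?_⟩
  rw [Algebra.smul_def, Polynomial.algebraMap_apply, algebraMap_def, map_C]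

lemma irreducible_integralNormalization {K : Type*} [Field K] {q : Polynomial K}
    (hq : Irreducible q) : Irreducible q.integralNormalization := by
  have lead_ne_zero : q.leadingCoeff ≠ 0 := Polynomial.leadingCoeff_ne_zero.mpr hq.ne_zero
  let _ := invertibleOfNonzero lead_ne_zero
  have rescale : Polynomial.algEquivCMulXAddC q.leadingCoeff 0 q.integralNormalization =
      Polynomial.C (q.leadingCoeff ^ (q.natDegree - 1)) * q := by
    have := Polynomial.integralNormalization_eval₂_leadingCoeff_mul hq.natDegree_pos
      (Polynomial.C : K →+* Polynomial K) Polynomial.X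
    rw [Polynomial.eval₂_C_X] at this
    rw [Polynomial.C_pow, ← this]
    simp [Polynomial.algEquivCMulXAddC, Polynomial.aeval_def]
  rw [← MulEquiv.irreducible_iff (Polynomial.algEquivCMulXAddC q.leadingCoeff 0), rescale]
  exact (irreducible_isUnit_mul
    (Polynomial.isUnit_C.mpr (lead_ne_zero.isUnit.pow _))).mpr hq

lemma irreducible_map_integralNormalization {A K : Type*} [CommRing A] [Field K] {φ : A →+* K}
    (hφ : Function.Injective φ) {p : Polynomial A} (hp : Irreducible (p.map φ)) :
    Irreducible (p.integralNormalization.map φ) := by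
  rw [← Polynomial.integralNormalization_map]
  · exact irreducible_integralNormalization hp
  · rw [Ne, map_eq_zero_iff φ hφ, Polynomial.leadingCoeff_eq_zero]
    rintro rfl
    exact hp.ne_zero (Polynomial.map_zero φ)

lemma exists_isRoot_integralNormalization {A B K : Type*} [CommRing A] [CommRing B] [IsDomain B]
    [UniqueFactorizationMonoid B] [Field K] [Algebra B K] [IsFractionRing B K] (φ : A →+* B)
    {p : Polynomial A} (hp : 1 ≤ p.natDegree) {t : K}
    (ht : p.eval₂ ((algebraMap B K).comp φ) t = 0) :
    ∃ z : B, (p.integralNormalization.map φ).IsRoot z := by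
  have root := Polynomial.integralNormalization_eval₂_leadingCoeff_mul hp
    ((algebraMap B K).comp φ) t
  rw [ht, mul_zero, ← Polynomial.eval₂_map] at root
  have hp0 : p ≠ 0 := Polynomial.ne_zero_of_natDegree_gt hp
  obtain ⟨z, hz⟩ := isInteger_of_is_root_of_monic
    ((Polynomial.monic_integralNormalization hp0).map φ) root
  refine ⟨z, IsFractionRing.injective B K ?_⟩
  rw [map_zero, ← root, ← hz, Polynomial.eval₂_hom]

lemma natDegree_eq_one_of_integer_roots {σ L : Type*} [Finite σ] [Field L]
    {j : MvPolynomial σ ℚ →+* L} (hj : Function.Injective j) {F : Polynomial (MvPolynomial σ ℤ)}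
    (hF : F.Monic) (hirr : Irreducible (F.map (j.comp (map (Int.castRingHom ℚ)))))
    (hsep : (F.map (j.comp (map (Int.castRingHom ℚ)))).Separable)
    {h : MvPolynomial σ ℚ} (hh : h ≠ 0)
    (hroot : ∀ x : σ → ℤ, eval (fun i => (x i : ℚ)) h ≠ 0 → ∃ z, (F.map (eval x)).IsRoot z) :
    F.natDegree = 1 := by
  have hinj : Function.Injective (j.comp (map (Int.castRingHom ℚ))) :=
    hj.comp (map_injective _ Int.cast_injective)
  have natDegree_map := Polynomial.natDegree_map_eq_of_injective hinj F
  obtain ⟨R, hR⟩ := exists_eval₂_eq_zero_of_integer_roots hF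
    (natDegree_map ▸ hirr.natDegree_pos.ne') (resultant_derivative_ne_zero hinj hsep) hh hroot
  have root : (F.map (j.comp (map (Int.castRingHom ℚ)))).IsRoot (j R) := by
    rw [Polynomial.IsRoot.def, Polynomial.eval_map, ← Polynomial.hom_eval₂, hR, map_zero]
  rw [← natDegree_map]
  exact Polynomial.natDegree_eq_of_degree_eq_some
    (Polynomial.degree_eq_one_of_irreducible_of_root hirr root)

theorem natDegree_le_one_of_rational_roots {σ : Type*} [Finite σ]
    {g : Polynomial (MvPolynomial σ ℚ)} (hg : Irreducible g) {h : MvPolynomial σ ℚ} (hh : h ≠ 0)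
    (hroot : ∀ x : σ → ℤ, eval (fun i => (x i : ℚ)) h ≠ 0 →
      ∃ t : ℚ, (g.map (eval fun i => (x i : ℚ))).IsRoot t) :
    g.natDegree ≤ 1 := by
  by_contra! hdeg
  set j := algebraMap (MvPolynomial σ ℚ) (FractionRing (MvPolynomial σ ℚ))
  have hj : Function.Injective j := IsFractionRing.injective _ _
  set κ : MvPolynomial σ ℤ →+* MvPolynomial σ ℚ := map (Int.castRingHom ℚ) with hκ
  have hκinj : Function.Injective κ := map_injective _ Int.cast_injective
  have hinj : Function.Injective (j.comp κ) := hj.comp hκinj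
  obtain ⟨N, hN, g₁, hg₁⟩ := exists_map_eq_C_mul (nonZeroDivisors ℤ) g
  have hN0 : (N : ℚ) ≠ 0 := Int.cast_ne_zero.mpr (nonZeroDivisors.ne_zero hN)
  rw [algebraMap_int_eq, eq_intCast, ← hκ] at hg₁
  have natDegree_eq : g₁.natDegree = g.natDegree := by
    rw [← Polynomial.natDegree_map_eq_of_injective hκinj, hg₁,
      Polynomial.natDegree_C_mul (C_ne_zero.mpr hN0)]
  have hg₁0 : g₁ ≠ 0 := Polynomial.ne_zero_of_natDegree_gt (natDegree_eq ▸ hdeg)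
  have irreducible_map : Irreducible (g₁.map (j.comp κ)) := by
    rw [← Polynomial.map_map, hg₁, Polynomial.map_mul, Polynomial.map_C]
    refine (irreducible_isUnit_mul ?_).mpr
      ((hg.isPrimitive (by omega)).irreducible_iff_irreducible_map_fraction_map.mp hg)
    exact Polynomial.isUnit_C.mpr (((IsUnit.mk0 _ hN0).map C).map j)
  have irreducible_normalization : Irreducible (g₁.integralNormalization.map (j.comp κ)) :=
    irreducible_map_integralNormalization hinj irreducible_map
  have normalization_roots (x : σ → ℤ) (hx : eval (fun i => (x i : ℚ)) h ≠ 0) :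
      ∃ z, (g₁.integralNormalization.map (eval x)).IsRoot z := by
    obtain ⟨t, ht⟩ := hroot x hx
    refine exists_isRoot_integralNormalization (K := ℚ) (eval x) (by omega) (t := t) ?_
    have comp_eq : (algebraMap ℤ ℚ).comp (eval x) = (eval fun i => (x i : ℚ)).comp κ := by
      ext i <;> simp [hκ]
    rw [comp_eq, ← Polynomial.eval₂_map, hg₁, ← Polynomial.eval_map, Polynomial.map_mul,
      Polynomial.eval_mul, ht.eq_zero, mul_zero]
  have := natDegree_eq_one_of_integer_roots hj (Polynomial.monic_integralNormalization hg₁0)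
    irreducible_normalization irreducible_normalization.separable hh normalization_roots
  rw [Polynomial.natDegree_eq_of_degree_eq g₁.degree_integralNormalization] at this
  omega

lemma exists_eval_eq_zero_of_eval_algebraMap_eq_zero {σ K L : Type*} [Field K] [Field L]
    [Algebra K L] {p : MvPolynomial σ L} (hp : p ≠ 0) :
    ∃ q : MvPolynomial σ K, q ≠ 0 ∧
      ∀ x : σ → K, eval (fun i => algebraMap K L (x i)) p = 0 → eval x q = 0 := by
  classical
  obtain ⟨α, hα⟩ := ne_zero_iff.mp hp
  obtain ⟨ℓ, hℓ⟩ : ∃ ℓ : Module.Dual K L, ℓ (p.coeff α) ≠ 0 := by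
    by_contra! H
    exact hα ((Module.forall_dual_apply_eq_zero_iff K _).mp H)
  let q : MvPolynomial σ K := ∑ β ∈ p.support, monomial β (ℓ (p.coeff β))
  refine ⟨q, ne_zero_iff.mpr ⟨α, ?_⟩, fun x hx => ?_⟩
  · rwa [coeff_sum, Finset.sum_congr rfl fun β _ => coeff_monomial .., Finset.sum_ite_eq',
      if_pos (mem_support_iff.mpr hα)]
  · have : eval x q = ℓ (eval (fun i => algebraMap K L (x i)) p) := by
      rw [eval_eq _ p, map_sum, map_sum]
      refine Finset.sum_congr rfl fun β _ => ?_
      rw [eval_monomial, Finsupp.prod]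
      simp only [← map_pow, ← map_prod]
      rw [mul_comm (p.coeff β), ← Algebra.smul_def, map_smul, smul_eq_mul, mul_comm]
    rw [this, hx, map_zero]

lemma ZClosed.exists_rational_polynomial {m : ℕ} {W : Set (Fin m → ℂ)} (hW : ZClosed m W)
    (hWproper : W ≠ Set.univ) :
    ∃ q : MvPolynomial (Fin m) ℚ, q ≠ 0 ∧
      ∀ x : Fin m → ℚ, (fun i => (x i : ℂ)) ∈ W → eval x q = 0 := by
  obtain ⟨P, rfl⟩ := hW
  obtain ⟨z, hz⟩ := (Set.ne_univ_iff_exists_notMem _).mp hWproper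
  simp only [Set.mem_ofPred_eq, not_forall] at hz
  obtain ⟨p, hp, hpz⟩ := hz
  obtain ⟨q, hq0, hq⟩ := exists_eval_eq_zero_of_eval_algebraMap_eq_zero (K := ℚ)
    (fun h : p = 0 => hpz (by rw [h, map_zero]))
  exact ⟨q, hq0, fun x hx => hq x (hx p hp)⟩

section LastVariable

variable {R : Type*} [CommRing R] {m : ℕ}

lemma natDegree_finSuccEquiv_rename_finRotate (f : MvPolynomial (Fin (m + 1)) R) :
    (finSuccEquiv R m (rename (finRotate (m + 1)) f)).natDegree = f.degreeOf (Fin.last m) := by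
  rw [natDegree_finSuccEquiv, ← finRotate_last (n := m),
    degreeOf_rename_of_injective (finRotate (m + 1)).injective]

lemma eval_map_finSuccEquiv_rename_finRotate (f : MvPolynomial (Fin (m + 1)) R) (x : Fin m → R)
    (t : R) : ((finSuccEquiv R m (rename (finRotate (m + 1)) f)).map (eval x)).eval t =
      eval (Fin.snoc x t : Fin (m + 1) → R) f := by
  rw [← eval_eq_eval_mv_eval', eval_rename, Fin.snoc_eq_cons_rotate]
  rfl

end LastVariable

theorem degree_le_one_of_rational_roots_general (m : ℕ) (f : MvPolynomial (Fin (m + 1)) ℚ)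
    (hf : Irreducible f) (W : Set (Fin m → ℂ)) (hW : ZClosed m W) (hWproper : W ≠ Set.univ)
    (h : ∀ x : Fin m → ℤ, (fun i => (x i : ℂ)) ∉ W →
      ∃ t : ℚ, eval (Fin.snoc (fun i => (x i : ℚ)) t) f = 0) :
    f.degreeOf (Fin.last m) ≤ 1 := by
  obtain ⟨q, hq0, hqW⟩ := hW.exists_rational_polynomial hWproper
  rw [← natDegree_finSuccEquiv_rename_finRotate]
  have hirr : Irreducible (finSuccEquiv ℚ m (renameEquiv ℚ (finRotate (m + 1)) f)) := by
    rwa [MulEquiv.irreducible_iff, MulEquiv.irreducible_iff]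
  refine natDegree_le_one_of_rational_roots hirr hq0 fun x hx => ?_
  obtain ⟨t, ht⟩ := h x fun hxW => hx (hqW _ (by simpa using hxW))
  exact ⟨t, (eval_map_finSuccEquiv_rename_finRotate f _ t).trans ht⟩

/-- Hilbert irreducibility consequence: let `n = m + 1 ≥ 2` and let
`f ∈ ℚ[x₁,…,xₙ]` be irreducible over `ℚ`. If there is a proper Zariski closed
subset `W ⊊ ℂ^{n-1}` such that for every rational point `ρ ∈ ℚ^{n-1}` outside `W`
the polynomial `f(ρ, xₙ)` has a rational root, then `f` has degree at most `1`
in the last variable `xₙ`. -/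
theorem degree_le_one_of_rational_roots (m : ℕ) (hm : 1 ≤ m)
    (f : MvPolynomial (Fin (m + 1)) ℚ) (hf : Irreducible f)
    (W : Set (Fin m → ℂ)) (hW : ZClosed m W) (hWproper : W ≠ Set.univ)
    (h : ∀ ρ : Fin m → ℚ, (fun i => (ρ i : ℂ)) ∉ W →
      ∃ t : ℚ, eval (Fin.snoc ρ t) f = 0) :
    f.degreeOf (Fin.last m) ≤ 1 :=
  degree_le_one_of_rational_roots_general m f hf W hW hWproper fun x hx =>
    h (fun i => x i) (by simpa using hx)
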